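/- (Upper bounds for detection.) Suppose that a satisfies at least one of the conditions: (i) a² n m p q → ∞; (ii) liminf a² n m / (2(n log(1/p) + m log(1/q))) > 1. Let ψ* = max{ψ^lin_H, ψ^max_T}, where H → ∞ with H < c·a√(n m p q) for some fixed c < 1, and T_{nm} = √(2 log G_{nm}). Then γ_{nm,a}(ψ*) → 0. -/

import Mathlib

/-!
The requirement `H < c · a √(nmpq)` with `c < 1` and `H → ∞` already forces `a √(nmpq) > H` and
`a √(nmpq) → ∞`, so the linear test alone controls the second-type error, and the scan test only
has to be shown not to spoil the first-type error.

* Normalised sums `(∑_{k ∈ F} y_k) / √|F|` are Gaussian with unit variance under `P_S`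
  (`matLaw_map_normSum`); both `t_lin` and `Y_C` are of this form.
* Mills' inequality `P(Z > T) ≤ e^{-T²/2} / T` (`gaussian_Ioi_le`, `gaussian_Iic_le`).
* Second-type error: under an alternative `t_lin` has mean at least `a √(nmpq)`, which exceeds `H`
  by at least `(1 - c) H`, so the error is at most `1 / ((1 - c) H)` (`betaMax_le`).
* First-type error: a union bound over the `G` submatrices together with `G e^{-T²/2} = 1` for
  `T = √(2 log G)` bounds it by `1 / H + 1 / T` (`alphaErr_le`). The factor `1 / T` in Mills'
  inequality is essential here. Finally `T → ∞` because `G ≥ C(N, n) ≥ N / n = 1 / p → ∞`.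
-/

open MeasureTheory ProbabilityTheory Filter Topology
open scoped Classical

noncomputable section

/-- Standard normal cumulative distribution function `Φ`. -/
def Phi (x : ℝ) : ℝ := ((gaussianReal 0 1) (Set.Iic x)).toReal

/-- Law `P_S` of the `N × M` observation matrix `Y_{ij} = s_{ij} + ξ_{ij}`
with i.i.d. standard Gaussian noise. -/
def matLaw (N M : ℕ) (S : Fin N → Fin M → ℝ) : Measure ((Fin N × Fin M) → ℝ) :=
  Measure.pi fun ij => gaussianReal (S ij.1 ij.2) 1

/-- First-type error `α(ψ) = E_0 ψ`. -/
def alphaErr (N M : ℕ) (ψ : ((Fin N × Fin M) → ℝ) → ℝ) : ℝ :=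
  ∫ y, ψ y ∂(matLaw N M fun _ _ => 0)

/-- Second-type error `β(ψ, S) = E_S (1 - ψ)`. -/
def betaErr (N M : ℕ) (S : Fin N → Fin M → ℝ) (ψ : ((Fin N × Fin M) → ℝ) → ℝ) : ℝ :=
  ∫ y, (1 - ψ y) ∂(matLaw N M S)

/-- The alternative class `S_{nm,a}`: some `n × m` submatrix `C = A × B` has all entries `≥ a`,
and all other entries vanish. -/
def SAlt (N M n m : ℕ) (a : ℝ) : Set (Fin N → Fin M → ℝ) :=
  {S | ∃ (A : Finset (Fin N)) (B : Finset (Fin M)), A.card = n ∧ B.card = m ∧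
      (∀ i j, i ∈ A → j ∈ B → a ≤ S i j) ∧ ∀ i j, ¬(i ∈ A ∧ j ∈ B) → S i j = 0}

/-- Maximal second-type error `β_{nm,a}(ψ)`. -/
def betaMax (N M n m : ℕ) (a : ℝ) (ψ : ((Fin N × Fin M) → ℝ) → ℝ) : ℝ :=
  sSup ((fun S => betaErr N M S ψ) '' SAlt N M n m a)

/-- Linear statistic `t_lin`. -/
def tlin (N M : ℕ) (y : (Fin N × Fin M) → ℝ) : ℝ :=
  (∑ ij : Fin N × Fin M, y ij) / Real.sqrt ((N : ℝ) * M)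

/-- Linear test `ψ^lin_H = 1{t_lin > H}`. -/
def psiLin (N M : ℕ) (H : ℝ) (y : (Fin N × Fin M) → ℝ) : ℝ :=
  if H < tlin N M y then 1 else 0

/-- Normalized submatrix sum `Y_C` for `C = A × B`. -/
def YC (N M : ℕ) (y : (Fin N × Fin M) → ℝ)
    (A : Finset (Fin N)) (B : Finset (Fin M)) : ℝ :=
  (∑ i ∈ A, ∑ j ∈ B, y (i, j)) / Real.sqrt ((A.card : ℝ) * B.card)

/-- Scan statistic `t_max = max_{C ∈ C_{nm}} Y_C`. -/
def tmax (N M n m : ℕ) (y : (Fin N × Fin M) → ℝ) : ℝ :=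
  sSup {v | ∃ (A : Finset (Fin N)) (B : Finset (Fin M)),
    A.card = n ∧ B.card = m ∧ v = YC N M y A B}

/-- `G_{nm} = C(N,n) · C(M,m)`, the number of `n × m` submatrices. -/
def Gnm (N M n m : ℕ) : ℕ := N.choose n * M.choose m

/-- Threshold `T_{nm} = √(2 log G_{nm})`. -/
def Tnm (N M n m : ℕ) : ℝ := Real.sqrt (2 * Real.log (Gnm N M n m : ℝ))

/-- Scan test `ψ^max_T = 1{t_max > T}`. -/
def psiMax (N M n m : ℕ) (T : ℝ) (y : (Fin N × Fin M) → ℝ) : ℝ :=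
  if T < tmax N M n m y then 1 else 0

/-- Total testing error `γ_{nm,a}(ψ) = α(ψ) + β_{nm,a}(ψ)`. -/
def gammaErr (N M n m : ℕ) (a : ℝ) (ψ : ((Fin N × Fin M) → ℝ) → ℝ) : ℝ :=
  alphaErr N M ψ + betaMax N M n m a ψ

/-! ### Gaussian tails -/

/-- Mills' inequality for the standard Gaussian, without the factor `1 / √(2π)`: on `(T, ∞)` the
density is at most `x / T` times itself, which has an explicit primitive. -/
lemma gaussian_std_Ioi_le {T : ℝ} (hT : 0 < T) :
    (gaussianReal 0 1).real (Set.Ioi T) ≤ Real.exp (-T ^ 2 / 2) / T := by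
  have hder : ∀ x ∈ Set.Ici T, HasDerivAt (fun x : ℝ => -Real.exp (-x ^ 2 / 2) / T)
      (x * Real.exp (-x ^ 2 / 2) / T) x := by
    intro x _
    have h1 : HasDerivAt (fun x : ℝ => -x ^ 2 / 2) (-x) x := by
      have := ((hasDerivAt_pow 2 x).neg).div_const 2
      convert! this using 1
      norm_num
      ring
    have := (h1.exp.neg).div_const T
    convert! this using 1
    ring
  have hlim : Tendsto (fun x : ℝ => -Real.exp (-x ^ 2 / 2) / T) atTop (𝓝 0) := by
    have h1 : Tendsto (fun x : ℝ => x ^ 2 / 2) atTop atTop :=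
      (tendsto_pow_atTop two_ne_zero).atTop_div_const two_pos
    have h2 := (Real.tendsto_exp_neg_atTop_nhds_zero.comp h1).neg.div_const T
    simpa [Function.comp_def, neg_div] using h2
  have hnn : ∀ x ∈ Set.Ioi T, 0 ≤ x * Real.exp (-x ^ 2 / 2) / T := by
    intro x hx
    have : 0 < x := hT.trans hx
    positivity
  have hint := integrableOn_Ioi_deriv_of_nonneg' hder hnn hlim
  have hval := integral_Ioi_of_hasDerivAt_of_tendsto' hder hint hlim
  rw [measureReal_def, gaussianReal_apply_eq_integral 0 one_ne_zero,
    ENNReal.toReal_ofReal (integral_nonneg fun x => gaussianPDFReal_nonneg _ _ _)]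
  calc ∫ x in Set.Ioi T, gaussianPDFReal 0 1 x
      ≤ ∫ x in Set.Ioi T, x * Real.exp (-x ^ 2 / 2) / T := by
        refine setIntegral_mono_on (integrable_gaussianPDFReal 0 1).integrableOn hint
          measurableSet_Ioi ?_
        intro x hx
        have hx' : T < x := hx
        have h1 : gaussianPDFReal 0 1 x ≤ Real.exp (-x ^ 2 / 2) := by
          rw [gaussianPDFReal]
          simp only [NNReal.coe_one, mul_one, sub_zero]
          refine mul_le_of_le_one_left (Real.exp_pos _).le (inv_le_one_of_one_le₀ ?_)
          rw [Real.one_le_sqrt]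
          linarith [Real.pi_gt_three]
        refine h1.trans ?_
        rw [mul_comm, mul_div_assoc]
        refine le_mul_of_one_le_right (Real.exp_pos _).le ?_
        rw [one_le_div hT]
        exact hx'.le
    _ = Real.exp (-T ^ 2 / 2) / T := by rw [hval]; ring

lemma gaussian_Ioi_le (μ : ℝ) {T : ℝ} (hT : 0 < T) :
    (gaussianReal μ 1).real (Set.Ioi (μ + T)) ≤ Real.exp (-T ^ 2 / 2) / T := by
  have h := gaussianReal_map_const_add (μ := 0) (v := 1) μ
  rw [zero_add] at h
  rw [← h, map_measureReal_apply (by fun_prop) measurableSet_Ioi]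
  simpa using gaussian_std_Ioi_le hT

lemma gaussian_Iic_le (μ : ℝ) {T : ℝ} (hT : 0 < T) :
    (gaussianReal μ 1).real (Set.Iic (μ - T)) ≤ Real.exp (-T ^ 2 / 2) / T := by
  have h := gaussianReal_map_const_sub (μ := 0) (v := 1) μ
  rw [sub_zero] at h
  rw [← h, map_measureReal_apply (by fun_prop) measurableSet_Iic]
  have h2 : (fun x => μ - x) ⁻¹' Set.Iic (μ - T) = Set.Ici T := by
    ext x; simp
  have := nullSingletonClass_gaussianReal (μ := 0) (v := 1) one_ne_zero
  rw [h2, measureReal_congr (Ioi_ae_eq_Ici (μ := gaussianReal 0 1) (a := T)).symm]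
  exact gaussian_std_Ioi_le hT

/-! ### Laws of normalised sums -/

instance matLaw_isProb (N M : ℕ) (S : Fin N → Fin M → ℝ) : IsProbabilityMeasure (matLaw N M S) := by
  unfold matLaw; infer_instance

lemma matLaw_map_sum (N M : ℕ) (S : Fin N → Fin M → ℝ) (F : Finset (Fin N × Fin M)) :
    (matLaw N M S).map (fun y => ∑ k ∈ F, y k)
      = gaussianReal (∑ k ∈ F, S k.1 k.2) (F.card : NNReal) := by
  have hind : iIndepFun (fun (k : Fin N × Fin M) (y : (Fin N × Fin M) → ℝ) => y k)
      (matLaw N M S) :=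
    iIndepFun_pi (μ := fun ij : Fin N × Fin M => gaussianReal (S ij.1 ij.2) 1)
      (X := fun _ => id) (fun _ => aemeasurable_id)
  induction F using Finset.induction_on with
  | empty => simp
  | insert k F hk ih =>
    have h1 := hind.indepFun_finsetSum_of_notMem (fun i => measurable_pi_apply i) hk
    have hk' : (matLaw N M S).map (fun y => y k) = gaussianReal (S k.1 k.2) 1 :=
      (measurePreserving_eval (fun ij : Fin N × Fin M => gaussianReal (S ij.1 ij.2) 1) k).map_eq
    have hF : (∑ j ∈ F, fun y : (Fin N × Fin M) → ℝ => y j) = fun y => ∑ k ∈ F, y k := by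
      ext y; simp
    rw [hF] at h1
    have h2 := gaussianReal_add_gaussianReal_of_indepFun h1.symm hk' ih
    rw [Finset.sum_insert hk, Finset.card_insert_of_notMem hk, Nat.cast_add, Nat.cast_one,
      add_comm (F.card : NNReal) 1, ← h2]
    congr 1
    ext y
    simp [Finset.sum_insert hk]

lemma matLaw_map_normSum (N M : ℕ) (S : Fin N → Fin M → ℝ) (F : Finset (Fin N × Fin M))
    (hF : F.Nonempty) :
    (matLaw N M S).map (fun y => (∑ k ∈ F, y k) / Real.sqrt F.card)
      = gaussianReal ((∑ k ∈ F, S k.1 k.2) / Real.sqrt F.card) 1 := by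
  have h := gaussianReal_map_div_const (μ := ∑ k ∈ F, S k.1 k.2) (v := (F.card : NNReal))
    (Real.sqrt F.card)
  rw [← matLaw_map_sum, Measure.map_map (by fun_prop) (by fun_prop)] at h
  have hc : (F.card : NNReal) ≠ 0 := by simpa using hF.ne_empty
  convert! h using 2
  ext
  simp [Real.sq_sqrt, div_self (show (F.card : ℝ) ≠ 0 by exact_mod_cast hc)]

lemma normSum_gt_le (N M : ℕ) (F : Finset (Fin N × Fin M)) (hF : F.Nonempty) {T : ℝ}
    (hT : 0 < T) :
    (matLaw N M fun _ _ => 0).real {y | T < (∑ k ∈ F, y k) / Real.sqrt F.card}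
      ≤ Real.exp (-T ^ 2 / 2) / T := by
  have h := matLaw_map_normSum N M (fun _ _ => 0) F hF
  have h2 := gaussian_Ioi_le 0 hT
  simp only [Finset.sum_const_zero, zero_div] at h
  rw [← h, map_measureReal_apply (by fun_prop) measurableSet_Ioi, zero_add] at h2
  exact h2

lemma exp_div_le {T : ℝ} (hT : 0 < T) : Real.exp (-T ^ 2 / 2) / T ≤ 1 / T := by
  have : Real.exp (-T ^ 2 / 2) ≤ 1 := Real.exp_le_one_iff.2 (by nlinarith [sq_nonneg T])
  gcongr

lemma tlin_eq (N M : ℕ) (y : (Fin N × Fin M) → ℝ) :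
    tlin N M y = (∑ k ∈ (Finset.univ : Finset (Fin N × Fin M)), y k)
      / Real.sqrt (Finset.univ : Finset (Fin N × Fin M)).card := by
  simp [tlin]

lemma YC_eq (N M : ℕ) (y : (Fin N × Fin M) → ℝ) (A : Finset (Fin N)) (B : Finset (Fin M)) :
    YC N M y A B = (∑ k ∈ A ×ˢ B, y k) / Real.sqrt (A ×ˢ B).card := by
  simp [YC, Finset.sum_product]

/-! ### First-type error -/

/-- The scan test is dominated by the sum of the tests `1{Y_C > T}` over all submatrices `C`. -/
lemma psiMax_le (N M n m : ℕ) (hn : n ≤ N) (hm : m ≤ M) (T : ℝ) (y : (Fin N × Fin M) → ℝ) :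
    psiMax N M n m T y ≤ ∑ C ∈ (Finset.univ.powersetCard n ×ˢ Finset.univ.powersetCard m :
      Finset (Finset (Fin N) × Finset (Fin M))),
      {y | T < YC N M y C.1 C.2}.indicator (fun _ => (1 : ℝ)) y := by
  have hnn : ∀ C ∈ (Finset.univ.powersetCard n ×ˢ Finset.univ.powersetCard m :
      Finset (Finset (Fin N) × Finset (Fin M))),
      0 ≤ {y | T < YC N M y C.1 C.2}.indicator (fun _ => (1 : ℝ)) y :=
    fun C _ => Set.indicator_nonneg (fun _ _ => zero_le_one) _
  unfold psiMax
  split_ifs with h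
  · obtain ⟨A, -, hA⟩ := Finset.exists_subset_card_eq
      (show n ≤ (Finset.univ : Finset (Fin N)).card by simpa using hn)
    obtain ⟨B, -, hB⟩ := Finset.exists_subset_card_eq
      (show m ≤ (Finset.univ : Finset (Fin M)).card by simpa using hm)
    have hne : {v | ∃ (A : Finset (Fin N)) (B : Finset (Fin M)),
        A.card = n ∧ B.card = m ∧ v = YC N M y A B}.Nonempty := ⟨_, A, B, hA, hB, rfl⟩
    obtain ⟨v, ⟨A', B', hA', hB', rfl⟩, hv⟩ := exists_lt_of_lt_csSup hne h
    refine le_trans ?_ (Finset.single_le_sum hnn (a := (A', B')) (by simp [hA', hB']))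
    rw [Set.indicator_of_mem (by exact hv)]
  · exact Finset.sum_nonneg hnn

lemma alphaErr_le (N M n m : ℕ) (hn1 : 1 ≤ n) (hn : n ≤ N) (hm1 : 1 ≤ m) (hm : m ≤ M) {H : ℝ}
    (hH : 0 < H) (hT : 0 < Tnm N M n m) :
    alphaErr N M (fun y => max (psiLin N M H y) (psiMax N M n m (Tnm N M n m) y))
      ≤ 1 / H + 1 / Tnm N M n m := by
  set T := Tnm N M n m with hTdef
  set K := (Finset.univ.powersetCard n ×ˢ Finset.univ.powersetCard m :
      Finset (Finset (Fin N) × Finset (Fin M))) with hK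
  set P := matLaw N M fun _ _ => 0 with hP
  have hKcard : K.card = Gnm N M n m := by simp [hK, Gnm]
  have hmeas1 : MeasurableSet {y : (Fin N × Fin M) → ℝ | H < tlin N M y} := by
    refine measurableSet_lt measurable_const ?_
    unfold tlin; fun_prop
  have hmeas2 : ∀ C : Finset (Fin N) × Finset (Fin M),
      MeasurableSet {y : (Fin N × Fin M) → ℝ | T < YC N M y C.1 C.2} := by
    intro C
    refine measurableSet_lt measurable_const ?_
    unfold YC; fun_prop
  have hi1 : Integrable ({y | H < tlin N M y}.indicator (fun _ => (1 : ℝ))) P :=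
    (integrable_const 1).indicator hmeas1
  have hi2 : ∀ C ∈ K, Integrable ({y | T < YC N M y C.1 C.2}.indicator (fun _ => (1 : ℝ))) P :=
    fun C _ => (integrable_const 1).indicator (hmeas2 C)
  have hlin : P.real {y | H < tlin N M y} ≤ 1 / H := by
    simp only [tlin_eq]
    refine (normSum_gt_le N M _ ?_ hH).trans (exp_div_le hH)
    exact ⟨(⟨0, by omega⟩, ⟨0, by omega⟩), Finset.mem_univ _⟩
  have hG : (1 : ℝ) ≤ Gnm N M n m := by
    exact_mod_cast Nat.mul_pos (Nat.choose_pos hn) (Nat.choose_pos hm)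
  have hscan : ∀ C ∈ K, P.real {y | T < YC N M y C.1 C.2} ≤ (1 / Gnm N M n m) * (1 / T) := by
    intro C hC
    simp only [hK, Finset.mem_product, Finset.mem_powersetCard_univ] at hC
    simp only [YC_eq]
    refine (normSum_gt_le N M _ ?_ hT).trans (le_of_eq ?_)
    · rw [← Finset.card_pos, Finset.card_product, hC.1, hC.2]
      positivity
    · -- the threshold is chosen so that `exp (-T² / 2) = 1 / G`
      have : -T ^ 2 / 2 = -Real.log (Gnm N M n m) := by
        rw [hTdef, Tnm, Real.sq_sqrt (by have := Real.log_nonneg hG; positivity)]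
        ring
      rw [this, Real.exp_neg, Real.exp_log (by linarith)]
      ring
  calc alphaErr N M (fun y => max (psiLin N M H y) (psiMax N M n m T y))
      ≤ ∫ y, ({y | H < tlin N M y}.indicator (fun _ => (1 : ℝ)) y +
          ∑ C ∈ K, {y | T < YC N M y C.1 C.2}.indicator (fun _ => (1 : ℝ)) y) ∂P := by
        unfold alphaErr
        refine integral_mono_of_nonneg (Eventually.of_forall fun y => ?_)
          (hi1.add (integrable_finsetSum K hi2)) (Eventually.of_forall fun y => ?_)
        · refine le_max_of_le_left ?_
          unfold psiLin
          split_ifs <;> simp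
        · have h1 : psiLin N M H y = {y | H < tlin N M y}.indicator (fun _ => (1 : ℝ)) y := by
            simp [psiLin, Set.indicator_apply]
          have h2 := psiMax_le N M n m hn hm T y
          have h3 : 0 ≤ psiLin N M H y := by unfold psiLin; split_ifs <;> simp
          have h4 : 0 ≤ psiMax N M n m T y := by unfold psiMax; split_ifs <;> simp
          refine (max_le_add_of_nonneg h3 h4).trans ?_
          rw [h1]
          exact add_le_add le_rfl h2
    _ = P.real {y | H < tlin N M y} + ∑ C ∈ K, P.real {y | T < YC N M y C.1 C.2} := by
        rw [integral_add hi1 (integrable_finsetSum K hi2), integral_finsetSum K hi2]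
        congr 1
        · exact integral_indicator_one hmeas1
        · exact Finset.sum_congr rfl fun C _ => integral_indicator_one (hmeas2 C)
    _ ≤ 1 / H + ∑ C ∈ K, (1 / Gnm N M n m) * (1 / T) :=
        add_le_add hlin (Finset.sum_le_sum hscan)
    _ = 1 / H + 1 / T := by
        rw [Finset.sum_const, hKcard, nsmul_eq_mul]
        field_simp

/-! ### Second-type error -/

/-- Under an alternative the mean of `t_lin` is at least `a √(nmpq)`. -/
lemma mean_tlin_ge (N M n m : ℕ) (a : ℝ) (S : Fin N → Fin M → ℝ) (hS : S ∈ SAlt N M n m a) :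
    a * Real.sqrt ((n : ℝ) * m * ((n : ℝ) / N) * ((m : ℝ) / M)) ≤
      (∑ k ∈ (Finset.univ : Finset (Fin N × Fin M)), S k.1 k.2)
        / Real.sqrt (Finset.univ : Finset (Fin N × Fin M)).card := by
  obtain ⟨A, B, hA, hB, hge, hzero⟩ := hS
  have hsum : (n : ℝ) * m * a ≤ ∑ k : Fin N × Fin M, S k.1 k.2 := by
    have h1 : ∑ k ∈ A ×ˢ B, S k.1 k.2 = ∑ k : Fin N × Fin M, S k.1 k.2 := by
      refine Finset.sum_subset (Finset.subset_univ _) fun k _ hk => hzero _ _ ?_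
      simpa using hk
    rw [← h1]
    have h2 := Finset.card_nsmul_le_sum (A ×ˢ B) (fun k => S k.1 k.2) a (fun k hk => by
      rw [Finset.mem_product] at hk
      exact hge _ _ hk.1 hk.2)
    simpa [hA, hB] using h2
  have hsq : Real.sqrt ((n : ℝ) * m * ((n : ℝ) / N) * ((m : ℝ) / M))
      = (n : ℝ) * m / Real.sqrt ((N : ℝ) * M) := by
    rw [show (n : ℝ) * m * ((n : ℝ) / N) * ((m : ℝ) / M) = ((n : ℝ) * m) ^ 2 / ((N : ℝ) * M) by
      ring, Real.sqrt_div (by positivity), Real.sqrt_sq (by positivity)]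
  have hcard : ((Finset.univ : Finset (Fin N × Fin M)).card : ℝ) = (N : ℝ) * M := by simp
  rw [hsq, hcard, ← mul_div_assoc, mul_comm a]
  gcongr

lemma one_sub_psi_nonneg (N M n m : ℕ) (H T : ℝ) (y : (Fin N × Fin M) → ℝ) :
    0 ≤ 1 - max (psiLin N M H y) (psiMax N M n m T y) := by
  unfold psiLin psiMax
  split_ifs <;> simp

lemma betaMax_nonneg (N M n m : ℕ) (a H T : ℝ) :
    0 ≤ betaMax N M n m a (fun y => max (psiLin N M H y) (psiMax N M n m T y)) := by
  refine Real.sSup_nonneg ?_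
  rintro _ ⟨S, -, rfl⟩
  exact integral_nonneg fun y => one_sub_psi_nonneg N M n m H T y

/-- If the mean of `t_lin` exceeds `H` by at least `δ` on the whole alternative, the second-type
error is at most `1 / δ`. -/
lemma betaMax_le (N M n m : ℕ) (hN : 0 < N) (hM : 0 < M) (a H T δ : ℝ) (hδ : 0 < δ)
    (h : H + δ ≤ a * Real.sqrt ((n : ℝ) * m * ((n : ℝ) / N) * ((m : ℝ) / M))) :
    betaMax N M n m a (fun y => max (psiLin N M H y) (psiMax N M n m T y)) ≤ 1 / δ := by
  refine Real.sSup_le ?_ (by positivity)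
  rintro _ ⟨S, hS, rfl⟩
  have hmean := h.trans (mean_tlin_ge N M n m a S hS)
  have hlaw := matLaw_map_normSum N M S Finset.univ ⟨(⟨0, hN⟩, ⟨0, hM⟩), Finset.mem_univ _⟩
  have hmeas : MeasurableSet {y : (Fin N × Fin M) → ℝ | tlin N M y ≤ H} := by
    refine measurableSet_le ?_ measurable_const
    unfold tlin; fun_prop
  calc betaErr N M S (fun y => max (psiLin N M H y) (psiMax N M n m T y))
      ≤ ∫ y, {y | tlin N M y ≤ H}.indicator (fun _ => (1 : ℝ)) y ∂(matLaw N M S) := by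
        unfold betaErr
        refine integral_mono_of_nonneg
          (Eventually.of_forall fun y => one_sub_psi_nonneg N M n m H T y)
          ((integrable_const 1).indicator hmeas) (Eventually.of_forall fun y => ?_)
        have h1 : 1 - psiLin N M H y
            = {y | tlin N M y ≤ H}.indicator (fun _ => (1 : ℝ)) y := by
          by_cases hy : H < tlin N M y
          · simp [psiLin, hy]
          · simp [psiLin, hy, not_lt.1 hy]
        show 1 - max (psiLin N M H y) (psiMax N M n m T y) ≤ _
        rw [← h1]
        linarith [le_max_left (psiLin N M H y) (psiMax N M n m T y)]
    _ = (matLaw N M S).real {y | tlin N M y ≤ H} := integral_indicator_one hmeas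
    _ ≤ 1 / δ := by
        simp only [tlin_eq]
        set μ := (∑ k ∈ (Finset.univ : Finset (Fin N × Fin M)), S k.1 k.2)
          / Real.sqrt (Finset.univ : Finset (Fin N × Fin M)).card with hμ
        have h2 := (gaussian_Iic_le μ hδ).trans (exp_div_le hδ)
        rw [← hlaw, map_measureReal_apply (by fun_prop) measurableSet_Iic] at h2
        refine (measureReal_mono ?_).trans h2
        intro y hy
        exact le_trans (show _ ≤ H from hy) (by linarith)

/-! ### Asymptotics -/

lemma div_le_Gnm (N M n m : ℕ) (hn1 : 1 ≤ n) (hn : n ≤ N) (hm : m ≤ M) :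
    (N : ℝ) / n ≤ Gnm N M n m := by
  obtain ⟨k, rfl⟩ := Nat.exists_eq_add_of_le' hn1
  obtain ⟨L, rfl⟩ := Nat.exists_eq_add_of_le' (hn1.trans hn)
  have h1 := Nat.add_one_mul_choose_eq L k
  have h2 : 0 < L.choose k := Nat.choose_pos (by omega)
  have h3 : 0 < M.choose m := Nat.choose_pos hm
  rw [div_le_iff₀ (by positivity)]
  have h4 : L + 1 ≤ Gnm (L + 1) M (k + 1) m * (k + 1) := by
    unfold Gnm
    calc L + 1 ≤ (L + 1) * L.choose k := Nat.le_mul_of_pos_right _ h2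
      _ = (L + 1).choose (k + 1) * (k + 1) := h1
      _ ≤ (L + 1).choose (k + 1) * M.choose m * (k + 1) :=
          Nat.mul_le_mul_right _ (Nat.le_mul_of_pos_right _ h3)
  exact_mod_cast h4

/-- Theorem 1 (upper bounds): if `a² n m p q → ∞` or
`liminf a² n m / (2(n log(1/p) + m log(1/q))) > 1`, then the combined test
`ψ* = max{ψ^lin_H, ψ^max_T}` with `H → ∞`, `H < c a √(nmpq)` for some `c < 1`,
and `T_{nm} = √(2 log G_{nm})` satisfies `γ_{nm,a}(ψ*) → 0`. -/
theorem stmt2 (N M n m : ℕ → ℕ) (a H : ℕ → ℝ)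
    (hb : ∀ t, 1 ≤ n t ∧ n t ≤ N t ∧ 1 ≤ m t ∧ m t ≤ M t)
    (ha : ∀ t, 0 < a t)
    (hN : Tendsto N atTop atTop) (hM : Tendsto M atTop atTop)
    (hn : Tendsto n atTop atTop) (hm : Tendsto m atTop atTop)
    (hp : Tendsto (fun t => (n t : ℝ) / N t) atTop (nhds 0))
    (hq : Tendsto (fun t => (m t : ℝ) / M t) atTop (nhds 0))
    (hH : Tendsto H atTop atTop)
    (hHc : ∃ c : ℝ, c < 1 ∧ ∀ t,
      H t < c * (a t * Real.sqrt ((n t : ℝ) * m t * ((n t : ℝ) / N t) * ((m t : ℝ) / M t))))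
    (hcond :
      Tendsto (fun t =>
          a t ^ 2 * ((n t : ℝ) * m t * ((n t : ℝ) / N t) * ((m t : ℝ) / M t)))
        atTop atTop ∨
      1 < Filter.liminf (fun t =>
          a t ^ 2 * ((n t : ℝ) * m t) /
            (2 * ((n t : ℝ) * Real.log ((N t : ℝ) / n t) +
              (m t : ℝ) * Real.log ((M t : ℝ) / m t)))) atTop) :
    Tendsto (fun t =>
      gammaErr (N t) (M t) (n t) (m t) (a t) (fun y =>
        max (psiLin (N t) (M t) (H t) y)
          (psiMax (N t) (M t) (n t) (m t) (Tnm (N t) (M t) (n t) (m t)) y)))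
      atTop (nhds 0) := by
  have hT : Tendsto (fun t => Tnm (N t) (M t) (n t) (m t)) atTop atTop := by
    have hinv : Tendsto (fun t => (N t : ℝ) / n t) atTop atTop := by
      have h1 : Tendsto (fun t => (n t : ℝ) / N t) atTop (𝓝[>] 0) := by
        refine tendsto_nhdsWithin_iff.2 ⟨hp, Eventually.of_forall fun t => ?_⟩
        have h2 : 0 < n t := (hb t).1
        have h3 : 0 < N t := h2.trans_le (hb t).2.1
        exact Set.mem_Ioi.2 (by positivity)
      simpa [Pi.inv_def] using h1.inv_tendsto_nhdsGT_zero
    have hG : Tendsto (fun t => (Gnm (N t) (M t) (n t) (m t) : ℝ)) atTop atTop :=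
      tendsto_atTop_mono
        (fun t => div_le_Gnm _ _ _ _ (hb t).1 (hb t).2.1 (hb t).2.2.2) hinv
    exact Real.tendsto_sqrt_atTop.comp
      ((Real.tendsto_log_atTop.comp hG).const_mul_atTop two_pos)
  obtain ⟨c, hc1, hc⟩ := hHc
  have hc1' : 0 < 1 - c := by linarith
  have hlim : Tendsto (fun t => 1 / H t + 1 / Tnm (N t) (M t) (n t) (m t)
      + 1 / ((1 - c) * H t)) atTop (𝓝 0) := by
    have h1 := hH.inv_tendsto_atTop
    have h2 := hT.inv_tendsto_atTop
    have h3 := (hH.const_mul_atTop hc1').inv_tendsto_atTop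
    simpa [one_div, Pi.inv_def] using (h1.add h2).add h3
  refine tendsto_of_tendsto_of_tendsto_of_le_of_le' tendsto_const_nhds hlim
    (Eventually.of_forall fun t => ?_) ?_
  · refine add_nonneg (integral_nonneg fun y => le_max_of_le_left ?_)
      (betaMax_nonneg _ _ _ _ _ _ _)
    unfold psiLin
    split_ifs <;> simp
  · filter_upwards [hH.eventually_gt_atTop 0, hT.eventually_gt_atTop 0] with t hHt hTt
    obtain ⟨hn1, hnN, hm1, hmM⟩ := hb t
    refine add_le_add (alphaErr_le _ _ _ _ hn1 hnN hm1 hmM hHt hTt)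
      (betaMax_le _ _ _ _ (by omega) (by omega) _ _ _ _ (by positivity) ?_)
    have hct := hc t
    set D := a t * Real.sqrt ((n t : ℝ) * m t * ((n t : ℝ) / N t) * ((m t : ℝ) / M t)) with hD
    have hD0 : 0 ≤ D := by have := ha t; positivity
    -- `0 < H < c D` forces `D > H`, hence `D - H ≥ (1 - c) D ≥ (1 - c) H`
    have hDH : H t < D := by nlinarith
    nlinarith
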